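/- If S ⊆ Q is a weakly infinite dimensional subset of the Hilbert cube, then the complement Q \ S is continuum connected: any two points x, y ∈ Q \ S are contained in a compact connected subset of Q \ S. -/

import Mathlib

open Set

/-- A separator between `A` and `B` in a topological space: a closed set `L` whose
complement is the union of two disjoint open sets containing `A` and `B` respectively. -/
def IsSeparator {X : Type*} [TopologicalSpace X] (A B L : Set X) : Prop :=
  IsClosed L ∧ ∃ U V : Set X, IsOpen U ∧ IsOpen V ∧ Disjoint U V ∧
    A ⊆ U ∧ B ⊆ V ∧ Lᶜ = U ∪ V

/-- A family of pairs of sets is essential if every choice of separators has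
nonempty intersection. -/
def IsEssentialFamily {X : Type*} [TopologicalSpace X] {Γ : Type*}
    (A B : Γ → Set X) : Prop :=
  ∀ L : Γ → Set X, (∀ i, IsSeparator (A i) (B i) (L i)) → (⋂ i, L i).Nonempty

/-- A space is strongly infinite dimensional if it admits a countably infinite
essential family of pairs of disjoint closed subsets. -/
def StronglyInfiniteDimensional (X : Type*) [TopologicalSpace X] : Prop :=
  ∃ A B : ℕ → Set X,
    (∀ n, IsClosed (A n) ∧ IsClosed (B n) ∧ Disjoint (A n) (B n)) ∧
    IsEssentialFamily A B

/-- The Hilbert cube `Q = [-1,1]^ℕ`. -/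
abbrev HilbertCube : Type := ℕ → Set.Icc (-1 : ℝ) 1

/-- The negative face `W_i^- = {x ∈ Q : x_i = -1}`. -/
def negFace (i : ℕ) : Set HilbertCube := {x | (x i : ℝ) = -1}

/-- The positive face `W_i^+ = {x ∈ Q : x_i = 1}`. -/
def posFace (i : ℕ) : Set HilbertCube := {x | (x i : ℝ) = 1}

/-!
Opposite faces of the Hilbert cube form an essential family. This is a degree argument on Kuhn's
triangulation of `[0, N]ⁿ`: by a discrete Stokes theorem the signed volume swept by a simplicial map
depends only on its values outside the cube, so it is the nonzero volume of a model map, and some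
simplex has a nondegenerate image. Compactness then lets the dimension and the mesh go to the limit.

If `T` is weakly infinite dimensional, then the pairs of opposite faces other than the `k`-th,
thickened and restricted to `T`, are inessential: they have separators in `T` with empty
intersection, and these extend to separators in `Q` whose intersection misses `T`. Since the faces
are essential, every separator of the `k`-th pair meets that intersection, so a component of the
intersection joins the two `k`-th faces.

Given `x ≠ y` outside `S`, choose `k` with `x k ≠ y k` and a map of `Q` to itself that collapses the
two `k`-th faces to `x` and `y` and is injective off them. The preimage `T` of `S` embeds in `S` as
a closed subset, hence is weakly infinite dimensional, and the image of a continuum joining the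
`k`-th faces off `T` joins `x` to `y` off `S`.
-/

section AffineDeterminant

variable {R P : Type*} [CommRing R] {n : ℕ}

/-- The determinant of the matrix with a top row of ones and entries `b j (z k)` below it: the
oriented volume, scaled by `n!`, of the simplex whose vertices are the images of the points `z k`
under the map with coordinate functions `b`. -/
def affineDet (b : Fin n → P → R) (z : Fin (n + 1) → P) : R :=
  Matrix.det (Matrix.of (Fin.cons 1 fun j k => b j (z k)))

theorem affineDet_eq_zero_of_const {b : Fin n → P → R} {z : Fin (n + 1) → P} (j : Fin n) (a : R)
    (h : ∀ k, b j (z k) = a) : affineDet b z = 0 := by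
  rw [affineDet]
  set M : Matrix (Fin (n + 1)) (Fin (n + 1)) R := Matrix.of (Fin.cons 1 fun j k => b j (z k))
  have hrow : M j.succ = a • M 0 := by
    ext k
    simp [M, h k]
  rw [← M.updateRow_eq_self j.succ, hrow, Matrix.det_updateRow_smul,
    M.det_updateRow_eq_zero (Fin.succ_ne_zero j).symm, mul_zero]

theorem affineDet_update (b : Fin n → P → R) (i : Fin n) (f : P → R) (z : Fin (n + 1) → P) :
    affineDet (Function.update b i f) z = Matrix.det
      ((Matrix.of (Fin.cons 1 fun j k => b j (z k))).updateRow i.succ (f ∘ z)) := by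
  rw [affineDet]
  congr 1
  ext r k
  refine Fin.cases ?_ (fun j => ?_) r
  · simp [Matrix.updateRow_ne (Fin.succ_ne_zero i).symm]
  · obtain rfl | hj := eq_or_ne j i
    · simp
    · simp [hj]

theorem affineDet_update_add (b : Fin n → P → R) (i : Fin n) (f g : P → R) (z : Fin (n + 1) → P) :
    affineDet (Function.update b i (f + g)) z =
      affineDet (Function.update b i f) z + affineDet (Function.update b i g) z := by
  simp only [affineDet_update]
  exact Matrix.det_updateRow_add _ _ _ _

theorem affineDet_eq_sum_row (b : Fin (n + 1) → P → R) (i : Fin (n + 1)) (z : Fin (n + 2) → P) :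
    affineDet b z = -(-1) ^ (i : ℕ) * ∑ k : Fin (n + 2), (-1) ^ (k : ℕ) *
      (b i (z k) * affineDet (b ∘ i.succAbove) (z ∘ k.succAbove)) := by
  rw [affineDet, Matrix.det_succ_row _ i.succ, Finset.mul_sum]
  refine Finset.sum_congr rfl fun k _ => ?_
  have hminor : (Matrix.of (Fin.cons 1 fun j k => b j (z k))).submatrix
      i.succ.succAbove k.succAbove = Matrix.of (Fin.cons (1 : Fin (n + 1) → R)
        fun j l => (b ∘ i.succAbove) j ((z ∘ k.succAbove) l)) := by
    ext r l
    refine Fin.cases ?_ (fun j => ?_) r <;> simp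
  rw [hminor, ← affineDet, Matrix.of_apply, Fin.cons_succ, Fin.val_succ]
  ring

theorem sum_neg_one_pow_mul_affineDet_succAbove (b : Fin n → P → R) (z : Fin (n + 2) → P) :
    ∑ k : Fin (n + 2), (-1) ^ (k : ℕ) * affineDet b (z ∘ k.succAbove) = 0 := by
  have hexpand := affineDet_eq_sum_row (Fin.cons 1 b) 0 z
  rw [affineDet_eq_zero_of_const 0 1 fun k => by simp] at hexpand
  simpa [Function.comp_def] using hexpand.symm

-- A discrete form of `d (b i · ⋀_{j ≠ i} d (b j)) = ± ⋀ d (b j)`. Summing `b i` over the vertices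
-- of a facet, instead of averaging it, gives coefficient `±1` in every dimension.
theorem sum_neg_one_pow_mul_sum_mul_affineDet_succAbove (b : Fin (n + 1) → P → R)
    (i : Fin (n + 1)) (z : Fin (n + 2) → P) :
    ∑ k : Fin (n + 2), (-1) ^ (k : ℕ) * ((∑ l, b i ((z ∘ k.succAbove) l)) *
      affineDet (b ∘ i.succAbove) (z ∘ k.succAbove)) = (-1) ^ (i : ℕ) * affineDet b z := by
  have hsum (k : Fin (n + 2)) :
      ∑ l, b i ((z ∘ k.succAbove) l) = (∑ l, b i (z l)) - b i (z k) := by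
    rw [Fin.sum_univ_succAbove _ k]
    simp
  have hsign : (-1 : R) ^ (i : ℕ) * (-1) ^ (i : ℕ) = 1 := by rw [← mul_pow]; simp
  calc
    _ = (∑ l, b i (z l)) * ∑ k : Fin (n + 2),
            (-1) ^ (k : ℕ) * affineDet (b ∘ i.succAbove) (z ∘ k.succAbove) -
          ∑ k : Fin (n + 2), (-1) ^ (k : ℕ) *
            (b i (z k) * affineDet (b ∘ i.succAbove) (z ∘ k.succAbove)) := by
      rw [Finset.mul_sum, ← Finset.sum_sub_distrib]
      refine Finset.sum_congr rfl fun k _ => ?_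
      rw [hsum]
      ring
    _ = (-1) ^ (i : ℕ) * affineDet b z := by
      rw [sum_neg_one_pow_mul_affineDet_succAbove, affineDet_eq_sum_row b i,
        mul_zero, zero_sub, ← mul_assoc, mul_neg, hsign, neg_one_mul]

end AffineDeterminant

section KuhnTriangulation

open Equiv.Perm (sign)

variable {n : ℕ}

theorem sum_comp_equiv_eq_of_eq_zero {α M : Type*} [AddCommMonoid M] {s : Finset α} (e : α ≃ α)
    {f : α → M} (hf : ∀ x ∉ s, f x = 0) (hfe : ∀ x ∉ s, f (e x) = 0) :
    ∑ x ∈ s, f (e x) = ∑ x ∈ s, f x := by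
  have hsum {g : α → M} (hg : ∀ x ∉ s, g x = 0) : ∑ x ∈ s, g x = ∑ᶠ x, g x :=
    (finsum_eq_sum_of_support_subset g (Function.support_subset_iff'.2 hg)).symm
  rw [hsum hf, hsum hfe, finsum_comp_equiv]

/-- A simplex of Kuhn's triangulation of `ℝⁿ`, encoded as its least vertex `v` together with the
order `σ` in which the coordinates are incremented along its edge path. -/
abbrev KuhnSimplex (n : ℕ) : Type := (Fin n → ℤ) × Equiv.Perm (Fin n)

namespace KuhnSimplex

/-- The `k`-th vertex `v + e_{σ 0} + ⋯ + e_{σ (k - 1)}` of the simplex `(v, σ)`. -/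
def vertex (x : KuhnSimplex n) (k : Fin (n + 1)) : Fin n → ℤ :=
  fun j => x.1 j + if (x.2.symm j).castSucc < k then 1 else 0

theorem vertex_mem_Icc (x : KuhnSimplex n) (k : Fin (n + 1)) :
    x.vertex k ∈ Icc x.1 (x.1 + 1) := by
  constructor <;> intro j <;> simp only [vertex, Pi.add_apply, Pi.one_apply] <;>
    split_ifs <;> simp

/-- The vertices of the facet opposite to the `k`-th vertex. -/
def facet (x : KuhnSimplex (n + 1)) (k : Fin (n + 2)) : Fin (n + 1) → Fin (n + 1) → ℤ :=
  x.vertex ∘ k.succAbove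

/-- The neighbour of a simplex across the facet opposite to its interior vertex `p + 1`. -/
def swapAt (p : Fin n) : KuhnSimplex (n + 1) ≃ KuhnSimplex (n + 1) :=
  (Equiv.refl _).prodCongr (Equiv.mulRight (Equiv.swap p.castSucc p.succ))

theorem vertex_swapAt (p : Fin n) (x : KuhnSimplex (n + 1)) {k : Fin (n + 2)}
    (hk : k ≠ p.castSucc.succ) : (swapAt p x).vertex k = x.vertex k := by
  ext j
  have hiff : (Equiv.swap p.castSucc p.succ (x.2.symm j)).castSucc < k ↔
      (x.2.symm j).castSucc < k := by
    generalize x.2.symm j = q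
    rw [Equiv.swap_apply_def]
    grind
  simp only [vertex, swapAt]
  exact congrArg (x.1 j + ·) (if_congr hiff rfl rfl)

theorem facet_swapAt (p : Fin n) (x : KuhnSimplex (n + 1)) :
    (swapAt p x).facet p.castSucc.succ = x.facet p.castSucc.succ :=
  funext fun _ => vertex_swapAt p x (Fin.succAbove_ne _ _)

/-- The neighbour of a simplex across the facet opposite to its least vertex. -/
def shift : KuhnSimplex (n + 1) ≃ KuhnSimplex (n + 1) where
  toFun x := (x.1 + Pi.single (x.2 0) 1, x.2 * finRotate (n + 1))
  invFun x := (x.1 - Pi.single ((x.2 * (finRotate (n + 1))⁻¹) 0) 1, x.2 * (finRotate (n + 1))⁻¹)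
  left_inv x := by ext <;> simp [mul_assoc]
  right_inv x := by ext <;> simp [mul_assoc]

theorem vertex_shift_castSucc (x : KuhnSimplex (n + 1)) (k : Fin (n + 1)) :
    (shift x).vertex k.castSucc = x.vertex k.succ := by
  ext j
  obtain ⟨q, rfl⟩ := x.2.surjective j
  have hrotate : (shift x).2.symm (x.2 q) = (finRotate (n + 1)).symm q := by
    simp [shift, Equiv.symm_apply_eq]
  simp only [vertex, hrotate, Equiv.symm_apply_apply]
  refine Fin.cases ?_ (fun q => ?_) q
  · have hzero : (finRotate (n + 1)).symm 0 = Fin.last n := by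
      rw [Equiv.symm_apply_eq]
      simp
    simp [shift, hzero, Fin.le_last]
  · have hsucc : (finRotate (n + 1)).symm q.succ = q.castSucc := by
      rw [Equiv.symm_apply_eq]
      simp
    simp [shift, hsucc]

theorem facet_shift_last (x : KuhnSimplex (n + 1)) :
    (shift x).facet (Fin.last (n + 1)) = x.facet 0 := by
  ext1 k
  simpa [facet] using vertex_shift_castSucc x k

theorem sign_swapAt (p : Fin n) (x : KuhnSimplex (n + 1)) :
    sign (swapAt p x).2 = -sign x.2 := by
  simp [swapAt, Equiv.Perm.sign_swap p.castSucc_lt_succ.ne]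

theorem sign_shift (x : KuhnSimplex (n + 1)) : sign (shift x).2 = sign x.2 * (-1) ^ n := by
  simp [shift, sign_finRotate]

section Stokes

variable {s : Finset (KuhnSimplex (n + 1))} {ω : (Fin (n + 1) → Fin (n + 1) → ℤ) → ℤ}

theorem sum_sign_mul_facet_interior (hω : ∀ x ∉ s, ∀ k, ω (x.facet k) = 0) (p : Fin n) :
    ∑ x ∈ s, (sign x.2 : ℤ) * ω (x.facet p.castSucc.succ) = 0 := by
  have hneg (x : KuhnSimplex (n + 1)) :
      (sign (swapAt p x).2 : ℤ) * ω ((swapAt p x).facet p.castSucc.succ) =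
        -((sign x.2 : ℤ) * ω (x.facet p.castSucc.succ)) := by
    rw [facet_swapAt, sign_swapAt, Units.val_neg, neg_mul]
  have hcancel := sum_comp_equiv_eq_of_eq_zero (s := s) (swapAt p)
    (f := fun x => (sign x.2 : ℤ) * ω (x.facet p.castSucc.succ))
    (fun x hx => by simp [hω x hx]) (fun x hx => by simp [hneg, hω x hx])
  simp only [hneg, Finset.sum_neg_distrib] at hcancel
  exact neg_eq_self.1 hcancel

theorem sum_sign_mul_facet_zero (hω : ∀ x ∉ s, ∀ k, ω (x.facet k) = 0) :
    ∑ x ∈ s, (sign x.2 : ℤ) * ω (x.facet 0) =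
      (-1) ^ n * ∑ x ∈ s, (sign x.2 : ℤ) * ω (x.facet (Fin.last (n + 1))) := by
  have hshift (x : KuhnSimplex (n + 1)) :
      (sign (shift x).2 : ℤ) * ω ((shift x).facet (Fin.last (n + 1))) =
        (-1) ^ n * ((sign x.2 : ℤ) * ω (x.facet 0)) := by
    rw [facet_shift_last, sign_shift]
    push_cast
    ring
  rw [← sum_comp_equiv_eq_of_eq_zero shift
    (f := fun x => (sign x.2 : ℤ) * ω (x.facet (Fin.last (n + 1))))
    (fun x hx => by simp [hω x hx]) (fun x hx => by simp [hshift, hω x hx])]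
  simp only [hshift, ← Finset.mul_sum]
  rw [← mul_assoc, ← mul_pow]
  simp

theorem sum_sign_mul_sum_facet (hω : ∀ x ∉ s, ∀ k, ω (x.facet k) = 0) :
    ∑ x ∈ s, (sign x.2 : ℤ) * ∑ k : Fin (n + 2), (-1) ^ (k : ℕ) * ω (x.facet k) = 0 := by
  have hswap : ∑ x ∈ s, (sign x.2 : ℤ) * ∑ k : Fin (n + 2), (-1) ^ (k : ℕ) * ω (x.facet k) =
      ∑ k : Fin (n + 2), (-1) ^ (k : ℕ) * ∑ x ∈ s, (sign x.2 : ℤ) * ω (x.facet k) := by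
    simp only [Finset.mul_sum, mul_left_comm]
    exact Finset.sum_comm
  rw [hswap, Fin.sum_univ_succ, Fin.sum_univ_castSucc]
  simp only [sum_sign_mul_facet_zero hω, sum_sign_mul_facet_interior hω]
  simp [pow_succ]

end Stokes

/-- The simplices of Kuhn's triangulation that subdivide the cube `[0, N]ⁿ`. -/
noncomputable def box (n : ℕ) (N : ℤ) : Finset (KuhnSimplex n) :=
  Fintype.piFinset (fun _ => Finset.Ico 0 N) ×ˢ Finset.univ

theorem mem_box {N : ℤ} {x : KuhnSimplex n} : x ∈ box n N ↔ ∀ j, 0 ≤ x.1 j ∧ x.1 j < N := by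
  simp [box]

end KuhnSimplex

/-- `f` is constant on each side of the slab `0 < z j < N`: it is `0` below and `a` above. -/
def IsSlabFunction (N : ℤ) (j : Fin n) (a : ℤ) (f : (Fin n → ℤ) → ℤ) : Prop :=
  ∀ z, (z j ≤ 0 → f z = 0) ∧ (N ≤ z j → f z = a)

/-- The degree, scaled by `n!`, of the simplicial map with coordinate functions `b` on the cube
`[0, N]ⁿ`: the sum of the oriented volumes of the images of its Kuhn simplices. -/
noncomputable def scaledDegree (N : ℤ) (b : Fin n → (Fin n → ℤ) → ℤ) : ℤ :=
  ∑ x ∈ KuhnSimplex.box n N, (sign x.2 : ℤ) * affineDet b x.vertex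

theorem exists_const_on_vertices_of_notMem_box {N : ℤ} {a : Fin n → ℤ}
    {b : Fin n → (Fin n → ℤ) → ℤ} (hb : ∀ j, IsSlabFunction N j (a j) (b j)) {x : KuhnSimplex n}
    (hx : x ∉ KuhnSimplex.box n N) :
    ∃ j c, (c = 0 ∨ c = a j) ∧ ∀ k, b j (x.vertex k) = c := by
  have houtside : ∃ j, x.1 j < 0 ∨ N ≤ x.1 j := by
    by_contra! hinside
    exact hx (KuhnSimplex.mem_box.2 hinside)
  obtain ⟨j, hlow | hhigh⟩ := houtside
  · refine ⟨j, 0, .inl rfl, fun k => (hb j _).1 ?_⟩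
    have := (x.vertex_mem_Icc k).2 j
    simp only [Pi.add_apply, Pi.one_apply] at this
    omega
  · exact ⟨j, a j, .inr rfl, fun k => (hb j _).2 (hhigh.trans ((x.vertex_mem_Icc k).1 j))⟩

theorem scaledDegree_eq_zero {N : ℤ} {a : Fin n → ℤ} {b : Fin n → (Fin n → ℤ) → ℤ}
    (hb : ∀ j, IsSlabFunction N j (a j) (b j)) (i : Fin n) (hi : a i = 0) :
    scaledDegree N b = 0 := by
  obtain _ | n := n
  · exact i.elim0
  let ω (y : Fin (n + 1) → Fin (n + 1) → ℤ) : ℤ :=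
    (∑ l, b i (y l)) * affineDet (b ∘ i.succAbove) y
  have hω (x) (hx : x ∉ KuhnSimplex.box (n + 1) N) (k) : ω (x.facet k) = 0 := by
    obtain ⟨j, c, hc, hconst⟩ := exists_const_on_vertices_of_notMem_box hb hx
    obtain rfl | ⟨j, rfl⟩ := i.eq_self_or_eq_succAbove j
    · rw [hi, or_self] at hc
      simp [ω, KuhnSimplex.facet, hconst, hc]
    · have hdet : affineDet (b ∘ i.succAbove) (x.facet k) = 0 :=
        affineDet_eq_zero_of_const j c fun l => hconst (k.succAbove l)
      simp [ω, hdet]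
  have hstokes := KuhnSimplex.sum_sign_mul_sum_facet hω
  simp only [ω, KuhnSimplex.facet, sum_neg_one_pow_mul_sum_mul_affineDet_succAbove] at hstokes
  simp only [mul_left_comm _ ((-1 : ℤ) ^ (i : ℕ)), ← Finset.mul_sum] at hstokes
  exact (mul_eq_zero.1 hstokes).resolve_left (by simp)

theorem scaledDegree_update {N : ℤ} {a : Fin n → ℤ} {b : Fin n → (Fin n → ℤ) → ℤ}
    (hb : ∀ j, IsSlabFunction N j (a j) (b j)) {i : Fin n} {f : (Fin n → ℤ) → ℤ}
    (hf : IsSlabFunction N i (a i) f) :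
    scaledDegree N (Function.update b i f) = scaledDegree N b := by
  have hdiff : scaledDegree N (Function.update b i (f - b i)) = 0 := by
    refine scaledDegree_eq_zero (a := Function.update a i 0) (fun j => ?_) i (by simp)
    obtain rfl | hj := eq_or_ne j i
    · intro z
      constructor <;> intro hz <;> simp [(hf z).1, (hf z).2, (hb j z).1, (hb j z).2, hz]
    · simpa [hj] using hb j
  calc
    scaledDegree N (Function.update b i f)
    _ = scaledDegree N (Function.update b i (f - b i + b i)) := by rw [sub_add_cancel]
    _ = scaledDegree N (Function.update b i (f - b i)) +
          scaledDegree N (Function.update b i (b i)) := by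
      simp only [scaledDegree, affineDet_update_add, mul_add, Finset.sum_add_distrib]
    _ = scaledDegree N b := by rw [hdiff, zero_add, Function.update_eq_self]

theorem scaledDegree_eq_of_isSlabFunction {N : ℤ} {a : Fin n → ℤ}
    {b c : Fin n → (Fin n → ℤ) → ℤ} (hb : ∀ j, IsSlabFunction N j (a j) (b j))
    (hc : ∀ j, IsSlabFunction N j (a j) (c j)) : scaledDegree N b = scaledDegree N c := by
  have hpiecewise (s : Finset (Fin n)) : scaledDegree N (s.piecewise b c) = scaledDegree N c := by
    induction s using Finset.induction_on with
    | empty => simp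
    | insert i s _ ih =>
      rw [Finset.piecewise_insert, scaledDegree_update (a := a) (fun j => ?_) (hb i), ih]
      by_cases hj : j ∈ s
      · simpa [hj] using hb j
      · simpa [hj] using hc j
  simpa using hpiecewise Finset.univ

/-- The indicators of the open half-spaces `0 < z j`. -/
def halfSpaceIndicator (n : ℕ) (j : Fin n) (z : Fin n → ℤ) : ℤ := if 0 < z j then 1 else 0

theorem isSlabFunction_halfSpaceIndicator {N : ℤ} (hN : 0 < N) (j : Fin n) :
    IsSlabFunction N j 1 (halfSpaceIndicator n j) :=
  fun _ => ⟨fun hz => if_neg hz.not_gt, fun hz => if_pos (hN.trans_le hz)⟩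

theorem affineDet_halfSpaceIndicator_zero (σ : Equiv.Perm (Fin n)) :
    affineDet (halfSpaceIndicator n) (KuhnSimplex.vertex (0, σ)) = sign σ := by
  let T : Matrix (Fin (n + 1)) (Fin (n + 1)) ℤ := Matrix.of fun r k => if r ≤ k then 1 else 0
  have hT : T.det = 1 := by
    have hupper : T.IsUpperTriangular := fun r k hrk => if_neg (not_le.2 hrk)
    rw [Matrix.det_of_isUpperTriangular hupper]
    simp [T]
  have hrows : Matrix.of (Fin.cons 1 fun j k =>
      halfSpaceIndicator n j (KuhnSimplex.vertex (0, σ) k)) =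
      T.submatrix (Equiv.Perm.decomposeFin.symm (0, σ⁻¹)) id := by
    ext r k
    refine Fin.cases ?_ (fun j => ?_) r
    · simp [T]
    · by_cases hj : (σ.symm j).castSucc < k <;>
        simp [T, halfSpaceIndicator, KuhnSimplex.vertex, hj, Fin.castSucc_lt_iff_succ_le.symm]
  rw [affineDet, hrows, Matrix.det_permute, hT]
  simp [Equiv.Perm.decomposeFin.symm_sign]

theorem affineDet_halfSpaceIndicator_eq_zero {x : KuhnSimplex n} (hx : 0 ≤ x.1) (hne : x.1 ≠ 0) :
    affineDet (halfSpaceIndicator n) x.vertex = 0 := by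
  obtain ⟨j, hj⟩ := Function.ne_iff.1 hne
  refine affineDet_eq_zero_of_const j 1 fun k => if_pos ?_
  exact ((hx j).lt_of_ne' hj).trans_le ((x.vertex_mem_Icc k).1 j)

theorem scaledDegree_halfSpaceIndicator {N : ℤ} (hN : 0 < N) :
    scaledDegree N (halfSpaceIndicator n) = n.factorial := by
  rw [scaledDegree, KuhnSimplex.box, Finset.sum_product, Finset.sum_eq_single 0]
  · simp [affineDet_halfSpaceIndicator_zero, ← Units.val_mul, Fintype.card_perm]
  · intro v hv hne
    refine Finset.sum_eq_zero fun σ _ => ?_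
    rw [affineDet_halfSpaceIndicator_eq_zero (fun j => ?_) hne, mul_zero]
    exact (Finset.mem_Ico.1 (Fintype.mem_piFinset.1 hv j)).1
  · simp [hN]

theorem exists_unitCube_meets_and_meets_compl {N : ℤ} (hN : 0 < N)
    (F : Fin n → Set (Fin n → ℤ)) (hlow : ∀ j z, z j ≤ 0 → z ∉ F j)
    (hhigh : ∀ j z, N ≤ z j → z ∈ F j) :
    ∃ v : Fin n → ℤ, ∀ j, (Icc v (v + 1) ∩ F j).Nonempty ∧ (Icc v (v + 1) \ F j).Nonempty := by
  let b (j : Fin n) : (Fin n → ℤ) → ℤ := (F j).indicator 1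
  have hb (j : Fin n) : IsSlabFunction N j 1 (b j) := fun z =>
    ⟨fun hz => indicator_of_notMem (hlow j z hz) _, fun hz => indicator_of_mem (hhigh j z hz) _⟩
  have hdegree : scaledDegree N b ≠ 0 := by
    rw [scaledDegree_eq_of_isSlabFunction hb (isSlabFunction_halfSpaceIndicator hN),
      scaledDegree_halfSpaceIndicator hN]
    exact_mod_cast n.factorial_ne_zero
  obtain ⟨x, -, hx⟩ := Finset.exists_ne_zero_of_sum_ne_zero hdegree
  have hdet : affineDet b x.vertex ≠ 0 := right_ne_zero_of_mul hx
  refine ⟨x.1, fun j => ⟨?_, ?_⟩⟩ <;> by_contra hempty <;>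
    rw [not_nonempty_iff_eq_empty] at hempty
  · refine hdet (affineDet_eq_zero_of_const j 0 fun k => indicator_of_notMem (fun hk => ?_) _)
    exact hempty.subset ⟨x.vertex_mem_Icc k, hk⟩
  · refine hdet (affineDet_eq_zero_of_const j 1 fun k => indicator_of_mem ?_ _)
    exact sdiff_eq_empty.1 hempty (x.vertex_mem_Icc k)

end KuhnTriangulation

section Faces

open Filter Topology

theorem isClosed_negFace (i : ℕ) : IsClosed (negFace i) :=
  isClosed_eq (by fun_prop) continuous_const

theorem isClosed_posFace (i : ℕ) : IsClosed (posFace i) :=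
  isClosed_eq (by fun_prop) continuous_const

theorem disjoint_negFace_posFace (i : ℕ) : Disjoint (negFace i) (posFace i) := by
  refine disjoint_left.2 fun z (hneg : (z i : ℝ) = -1) (hpos : (z i : ℝ) = 1) => ?_
  norm_num [hneg] at hpos

/-- The point of the Hilbert cube with coordinates `-1 + 2 * z j / n` for `j < n`, clamped to
`[-1, 1]`, and all further coordinates zero. The number `n` of free coordinates also sets the mesh,
so that a single limit `n → ∞` refines the grid and exhausts the coordinates. -/
noncomputable def gridPoint {n : ℕ} (z : Fin n → ℤ) : HilbertCube := fun l =>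
  if hl : l < n then projIcc (-1 : ℝ) 1 (by norm_num) (-1 + 2 * z ⟨l, hl⟩ / n) else
    ⟨0, by norm_num⟩

variable {n : ℕ}

theorem gridPoint_mem_negFace {z : Fin n → ℤ} {j : Fin n} (hz : z j ≤ 0) :
    gridPoint z ∈ negFace j := by
  have hcoord : 2 * (z j : ℝ) / n ≤ 0 :=
    div_nonpos_of_nonpos_of_nonneg (by exact_mod_cast mul_nonpos_of_nonneg_of_nonpos two_pos.le hz)
      n.cast_nonneg
  simp [negFace, gridPoint, projIcc_of_le_left, hcoord]

theorem gridPoint_mem_posFace {z : Fin n → ℤ} {j : Fin n} (hz : n ≤ z j) :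
    gridPoint z ∈ posFace j := by
  have hn : (0 : ℝ) < n := Nat.cast_pos.2 j.pos
  have hcoord : 1 ≤ -1 + 2 * (z j : ℝ) / n := by
    have : (n : ℝ) ≤ z j := by exact_mod_cast hz
    have : 2 ≤ 2 * (z j : ℝ) / n := by rw [le_div_iff₀ hn]; linarith
    linarith
  simp [posFace, gridPoint, projIcc_of_right_le _ hcoord]

theorem dist_gridPoint_apply_le {v z : Fin n → ℤ} (hz : z ∈ Icc v (v + 1)) (l : ℕ) :
    dist (gridPoint v l) (gridPoint z l) ≤ 2 / n := by
  rw [Subtype.dist_eq, dist_comm, Real.dist_eq]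
  unfold gridPoint
  split_ifs with hl
  · have hlow : (v ⟨l, hl⟩ : ℝ) ≤ z ⟨l, hl⟩ := by exact_mod_cast hz.1 ⟨l, hl⟩
    have hhigh : (z ⟨l, hl⟩ : ℝ) ≤ v ⟨l, hl⟩ + 1 := by exact_mod_cast hz.2 ⟨l, hl⟩
    refine (abs_projIcc_sub_projIcc _).trans ?_
    rw [add_sub_add_left_eq_sub, ← sub_div, ← mul_sub, abs_of_nonneg]
    · gcongr
      linarith
    · exact div_nonneg (by linarith) n.cast_nonneg
  · rw [sub_self, abs_zero]
    positivity

theorem tendsto_gridPoint_of_mem_Icc {ι : Type*} {l : Filter ι} {N : ι → ℕ}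
    (hN : Tendsto N l atTop) {v z : ∀ i, Fin (N i) → ℤ} {a : HilbertCube}
    (hv : Tendsto (fun i => gridPoint (v i)) l (𝓝 a))
    (hz : ∀ᶠ i in l, z i ∈ Icc (v i) (v i + 1)) :
    Tendsto (fun i => gridPoint (z i)) l (𝓝 a) := by
  rw [tendsto_pi_nhds] at hv ⊢
  refine fun k => (hv k).congr_dist (squeeze_zero' (.of_forall fun _ => dist_nonneg)
    (hz.mono fun i hi => dist_gridPoint_apply_le hi k) ?_)
  exact (tendsto_const_div_atTop_nhds_zero_nat 2).comp hN

theorem exists_gridPoint_mem_and_notMem {V : ℕ → Set HilbertCube}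
    (hneg : ∀ i, Disjoint (negFace i) (V i)) (hpos : ∀ i, posFace i ⊆ V i) (hn : 0 < n) :
    ∃ v : Fin n → ℤ, ∀ i < n, (∃ z ∈ Icc v (v + 1), gridPoint z ∈ V i) ∧
      ∃ z ∈ Icc v (v + 1), gridPoint z ∉ V i := by
  obtain ⟨v, hv⟩ := exists_unitCube_meets_and_meets_compl (Nat.cast_pos.2 hn)
    (fun j : Fin n => gridPoint ⁻¹' V j)
    (fun j _ hz => (hneg j).notMem_of_mem_left (gridPoint_mem_negFace hz))
    (fun j _ hz => hpos j (gridPoint_mem_posFace hz))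
  exact ⟨v, fun i hi => hv ⟨i, hi⟩⟩

theorem isEssentialFamily_negFace_posFace : IsEssentialFamily negFace posFace := by
  intro L hL
  choose _ U V hU hV hUV hneg hpos hLUV using hL
  choose v hv using fun N : ℕ => exists_gridPoint_mem_and_notMem
    (fun i => (hUV i).mono_left (hneg i)) hpos N.succ_pos
  choose! z hz hzV using fun N i (hi : i < N + 1) => (hv N i hi).1
  choose! w hw hwV using fun N i (hi : i < N + 1) => (hv N i hi).2
  obtain ⟨a, φ, hφ, ha⟩ := CompactSpace.tendsto_subseq fun N => gridPoint (v N)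
  have hdim : Tendsto (fun N => φ N + 1) atTop atTop :=
    (tendsto_add_atTop_nat 1).comp hφ.tendsto_atTop
  refine ⟨a, mem_iInter.2 fun i => ?_⟩
  have hlarge : ∀ᶠ N in atTop, i < φ N + 1 := hdim.eventually_gt_atTop i
  have hzlim : Tendsto (fun N => gridPoint (z (φ N) i)) atTop (𝓝 a) :=
    tendsto_gridPoint_of_mem_Icc hdim ha (hlarge.mono fun N hN => hz (φ N) i hN)
  have hwlim : Tendsto (fun N => gridPoint (w (φ N) i)) atTop (𝓝 a) :=
    tendsto_gridPoint_of_mem_Icc hdim ha (hlarge.mono fun N hN => hw (φ N) i hN)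
  by_contra hmem
  obtain haU | haV : a ∈ U i ∪ V i := hLUV i ▸ hmem
  · obtain ⟨N, hNU, hN⟩ := ((hzlim.eventually_mem ((hU i).mem_nhds haU)).and hlarge).exists
    exact (hUV i).notMem_of_mem_left hNU (hzV (φ N) i hN)
  · obtain ⟨N, hNV, hN⟩ := ((hwlim.eventually_mem ((hV i).mem_nhds haV)).and hlarge).exists
    exact hwV (φ N) i hN hNV

end Faces

section Separators

open Topology

variable {X Y : Type*} [TopologicalSpace X] [TopologicalSpace Y] {Γ : Type*}

theorem IsSeparator.preimage {A B L : Set Y} (hL : IsSeparator A B L) {f : X → Y}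
    (hf : Continuous f) : IsSeparator (f ⁻¹' A) (f ⁻¹' B) (f ⁻¹' L) := by
  obtain ⟨hclosed, U, V, hU, hV, hUV, hAU, hBV, hLUV⟩ := hL
  exact ⟨hclosed.preimage hf, f ⁻¹' U, f ⁻¹' V, hU.preimage hf, hV.preimage hf, hUV.preimage f,
    preimage_mono hAU, preimage_mono hBV, congrArg (f ⁻¹' ·) hLUV⟩

theorem exists_isSeparator_disjoint_of_separatedNhds {A B P R : Set X}
    (h : SeparatedNhds (P ∪ A) (R ∪ B)) : ∃ L, IsSeparator A B L ∧ Disjoint L (P ∪ R) := by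
  obtain ⟨U, V, hU, hV, hPU, hRV, hUV⟩ := h
  refine ⟨(U ∪ V)ᶜ, ⟨(hU.union hV).isClosed_compl, U, V, hU, hV, hUV,
    subset_union_right.trans hPU, subset_union_right.trans hRV, compl_compl _⟩, ?_⟩
  exact disjoint_compl_left_iff_subset.2
    (union_subset_union (subset_union_left.trans hPU) (subset_union_left.trans hRV))

theorem StronglyInfiniteDimensional.of_isClosedEmbedding {f : X → Y} (hf : IsClosedEmbedding f)
    (hX : StronglyInfiniteDimensional X) : StronglyInfiniteDimensional Y := by
  obtain ⟨A, B, hAB, hess⟩ := hX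
  refine ⟨fun n => f '' A n, fun n => f '' B n, fun n => ⟨hf.isClosedMap _ (hAB n).1,
    hf.isClosedMap _ (hAB n).2.1, (disjoint_image_iff hf.injective).2 (hAB n).2.2⟩, ?_⟩
  intro L hL
  obtain ⟨a, ha⟩ := hess (fun n => f ⁻¹' L n) fun n => by
    simpa only [preimage_image_eq _ hf.injective] using (hL n).preimage hf.continuous
  exact ⟨f a, by simpa using ha⟩

theorem IsEssentialFamily.stronglyInfiniteDimensional [Countable Γ] [Infinite Γ] {A B : Γ → Set X}
    (hess : IsEssentialFamily A B) (hA : ∀ i, IsClosed (A i)) (hB : ∀ i, IsClosed (B i))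
    (hAB : ∀ i, Disjoint (A i) (B i)) : StronglyInfiniteDimensional X := by
  obtain ⟨_⟩ := nonempty_denumerable Γ
  let e : Γ ≃ ℕ := Denumerable.eqv Γ
  refine ⟨A ∘ e.symm, B ∘ e.symm, fun n => ⟨hA _, hB _, hAB _⟩, fun L hL => ?_⟩
  rw [← e.surjective.iInter_comp]
  exact hess _ fun i => by simpa using hL (e i)

theorem exists_isClopen_of_disjoint_connectedComponent [CompactSpace X] [T2Space X] {A B : Set X}
    (hA : IsClosed A) (hB : IsClosed B) (hAB : ∀ a ∈ A, Disjoint (connectedComponent a) B) :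
    ∃ P, IsClopen P ∧ A ⊆ P ∧ Disjoint P B := by
  let π : X → ConnectedComponents X := ConnectedComponents.mk
  have hπ : Continuous π := ConnectedComponents.continuous_coe
  have hsub : π '' A ⊆ (π '' B)ᶜ := by
    rintro _ ⟨a, ha, rfl⟩ ⟨b, hb, hba⟩
    exact (hAB a ha).notMem_of_mem_left (ConnectedComponents.coe_eq_coe'.1 hba) hb
  obtain ⟨C, hC, hAC, hCB⟩ := exists_clopen_of_closed_subset_open
    (hA.isCompact.image hπ).isClosed (hB.isCompact.image hπ).isClosed.isOpen_compl hsub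
  exact ⟨π ⁻¹' C, hC.preimage hπ, image_subset_iff.1 hAC,
    disjoint_left.2 fun b hbC hb => hCB hbC ⟨b, hb, rfl⟩⟩

theorem exists_isSeparator_disjoint_of_isClopen [NormalSpace X] {A B K : Set X} (hA : IsClosed A)
    (hB : IsClosed B) (hK : IsClosed K) (hAB : Disjoint A B) {P : Set K} (hP : IsClopen P)
    (hAP : (↑) ⁻¹' A ⊆ P) (hPB : Disjoint P ((↑) ⁻¹' B)) :
    ∃ L, IsSeparator A B L ∧ Disjoint L K := by
  have hclosed {R : Set K} (hR : IsClosed R) : IsClosed ((↑) '' R : Set X) :=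
    hK.isClosedEmbedding_subtypeVal.isClosedMap R hR
  have hdisj : Disjoint ((↑) '' P ∪ A) ((↑) '' Pᶜ ∪ B) := by
    simp only [disjoint_union_left, disjoint_union_right]
    refine ⟨⟨?_, ?_⟩, ?_, hAB⟩
    · exact (disjoint_image_iff Subtype.val_injective).2 disjoint_compl_right
    · exact disjoint_image_right.2 (disjoint_compl_right.mono_left hAP)
    · exact disjoint_image_left.2 hPB
  obtain ⟨L, hL, hLK⟩ := exists_isSeparator_disjoint_of_separatedNhds <|
    normal_separation ((hclosed hP.isClosed).union hA) ((hclosed hP.compl.isClosed).union hB) hdisj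
  refine ⟨L, hL, ?_⟩
  rwa [← image_union, union_compl_self, image_univ, Subtype.range_coe] at hLK

theorem exists_isConnected_subset_of_forall_isSeparator [CompactSpace X] [T2Space X]
    {A B K : Set X} (hA : IsClosed A) (hB : IsClosed B) (hK : IsClosed K) (hAB : Disjoint A B)
    (hmeet : ∀ L, IsSeparator A B L → (L ∩ K).Nonempty) :
    ∃ C ⊆ K, IsCompact C ∧ IsConnected C ∧ (C ∩ A).Nonempty ∧ (C ∩ B).Nonempty := by
  have : CompactSpace K := isCompact_iff_compactSpace.1 hK.isCompact
  have hcomponent : ∃ a : K, (a : X) ∈ A ∧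
      (connectedComponent a ∩ (↑) ⁻¹' B : Set K).Nonempty := by
    by_contra! hempty
    obtain ⟨P, hP, hAP, hPB⟩ := exists_isClopen_of_disjoint_connectedComponent
      (hA.preimage continuous_subtype_val) (hB.preimage continuous_subtype_val)
      fun a ha => disjoint_iff_inter_eq_empty.2 (hempty a ha)
    obtain ⟨L, hL, hLK⟩ := exists_isSeparator_disjoint_of_isClopen hA hB hK hAB hP hAP hPB
    exact (hmeet L hL).ne_empty hLK.inter_eq
  obtain ⟨a, ha, b, hab, hb⟩ := hcomponent
  exact ⟨(↑) '' connectedComponent a, Subtype.coe_image_subset K _,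
    isClosed_connectedComponent.isCompact.image continuous_subtype_val,
    isConnected_connectedComponent.image _ continuous_subtype_val.continuousOn,
    ⟨a, mem_image_of_mem _ mem_connectedComponent, ha⟩, ⟨b, mem_image_of_mem _ hab, hb⟩⟩

theorem IsEssentialFamily.exists_isConnected_subset_iInter [CompactSpace X] [T2Space X]
    {A B : Γ → Set X} (hess : IsEssentialFamily A B) {i₀ : Γ} (hA : IsClosed (A i₀))
    (hB : IsClosed (B i₀)) (hAB : Disjoint (A i₀) (B i₀)) {L : {i // i ≠ i₀} → Set X}
    (hL : ∀ i : {i // i ≠ i₀}, IsSeparator (A i) (B i) (L i)) :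
    ∃ C ⊆ ⋂ i, L i, IsCompact C ∧ IsConnected C ∧ (C ∩ A i₀).Nonempty ∧ (C ∩ B i₀).Nonempty := by
  classical
  refine exists_isConnected_subset_of_forall_isSeparator hA hB (isClosed_iInter fun i => (hL i).1)
    hAB fun M hM => ?_
  obtain ⟨a, ha⟩ := hess (fun i => if hi : i = i₀ then M else L ⟨i, hi⟩) fun i => by
    by_cases hi : i = i₀
    · subst hi
      simpa using hM
    · simpa [hi] using hL ⟨i, hi⟩
  rw [mem_iInter] at ha
  exact ⟨a, by simpa using ha i₀, mem_iInter.2 fun i => by simpa [i.2] using ha i⟩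

theorem disjoint_closure_image_union {T A B B' : Set X} {U V : Set T} (hV : IsOpen V)
    (hUV : Disjoint U V) (hA : IsClosed A) (hAB : Disjoint A B) (hBB' : B ⊆ interior B')
    (hAU : (↑) ⁻¹' A ⊆ U) (hBV : (↑) ⁻¹' B' ⊆ V) :
    Disjoint (closure ((↑) '' U ∪ A)) ((↑) '' V ∪ B) := by
  rw [closure_union, hA.closure_eq]
  simp only [disjoint_union_left, disjoint_union_right]
  refine ⟨⟨?_, ?_⟩, ?_, hAB⟩
  · obtain ⟨W, hW, rfl⟩ := isOpen_induced_iff.1 hV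
    exact .mono_right (image_preimage_subset _ _) (.closure_left (disjoint_image_left.2 hUV) hW)
  · exact disjoint_image_right.2 (hUV.mono_left hAU)
  · refine .mono_right hBB' (.closure_left (disjoint_image_left.2 ?_) isOpen_interior)
    exact hUV.mono_right ((preimage_mono interior_subset).trans hBV)

theorem IsSeparator.exists_extension [CompletelyNormalSpace X] {T A B A' B' : Set X}
    (hA : IsClosed A) (hB : IsClosed B) (hAB : Disjoint A B) (hAA' : A ⊆ interior A')
    (hBB' : B ⊆ interior B') {L : Set T} (hL : IsSeparator ((↑) ⁻¹' A') ((↑) ⁻¹' B') L) :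
    ∃ M, IsSeparator A B M ∧ (↑) ⁻¹' M ⊆ L := by
  obtain ⟨-, U, V, hU, hV, hUV, hAU, hBV, hLUV⟩ := hL
  have hAU' : ((↑) ⁻¹' A : Set T) ⊆ U :=
    (preimage_mono (hAA'.trans interior_subset)).trans hAU
  have hBV' : ((↑) ⁻¹' B : Set T) ⊆ V :=
    (preimage_mono (hBB'.trans interior_subset)).trans hBV
  have hnhds : SeparatedNhds ((↑) '' U ∪ A) ((↑) '' V ∪ B) := by
    refine separatedNhds_iff_disjoint.2 (completely_normal ?_ ?_)
    · exact disjoint_closure_image_union hV hUV hA hAB hBB' hAU' hBV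
    · exact (disjoint_closure_image_union hU hUV.symm hB hAB.symm hAA' hBV' hAU).symm
  obtain ⟨M, hM, hMUV⟩ := exists_isSeparator_disjoint_of_separatedNhds hnhds
  refine ⟨M, hM, disjoint_compl_right_iff_subset.1 ?_⟩
  rwa [hLUV, ← disjoint_image_right, image_union]

theorem exists_isClosed_disjoint_subset_interior [NormalSpace X] {A B : Set X} (hA : IsClosed A)
    (hB : IsClosed B) (hAB : Disjoint A B) : ∃ A' B', IsClosed A' ∧ IsClosed B' ∧ Disjoint A' B' ∧
      A ⊆ interior A' ∧ B ⊆ interior B' := by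
  obtain ⟨U, hU, hAU, hUB⟩ :=
    normal_exists_closure_subset hA hB.isOpen_compl hAB.subset_compl_right
  obtain ⟨V, hV, hBV, hVU⟩ :=
    normal_exists_closure_subset hB isClosed_closure.isOpen_compl (subset_compl_comm.1 hUB)
  exact ⟨closure U, closure V, isClosed_closure, isClosed_closure,
    (disjoint_left.2 fun _ hxV hxU => hVU hxV hxU).symm,
    hAU.trans hU.subset_interior_closure, hBV.trans hV.subset_interior_closure⟩

theorem IsEssentialFamily.exists_isConnected_subset_compl [CompactSpace X] [T2Space X]
    [CompletelyNormalSpace X] [Countable Γ] [Infinite Γ] {A B : Γ → Set X}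
    (hess : IsEssentialFamily A B) (hA : ∀ i, IsClosed (A i)) (hB : ∀ i, IsClosed (B i))
    (hAB : ∀ i, Disjoint (A i) (B i)) {T : Set X} (hT : ¬ StronglyInfiniteDimensional T) (i₀ : Γ) :
    ∃ C ⊆ Tᶜ, IsCompact C ∧ IsConnected C ∧ (C ∩ A i₀).Nonempty ∧ (C ∩ B i₀).Nonempty := by
  choose A' B' hA' hB' hAB' hAA' hBB' using
    fun i => exists_isClosed_disjoint_subset_interior (hA i) (hB i) (hAB i)
  have : Infinite {i // i ≠ i₀} := (finite_singleton i₀).infinite_compl.to_subtype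
  have hinessential : ¬ IsEssentialFamily (fun i : {i // i ≠ i₀} => ((↑) ⁻¹' A' i : Set T))
      (fun i => (↑) ⁻¹' B' i) := fun h =>
    hT <| h.stronglyInfiniteDimensional (fun i => (hA' i).preimage continuous_subtype_val)
      (fun i => (hB' i).preimage continuous_subtype_val) fun i => (hAB' i).preimage _
  simp only [IsEssentialFamily, not_forall, not_nonempty_iff_eq_empty] at hinessential
  obtain ⟨L, hL, hempty⟩ := hinessential
  choose M hM hML using fun i : {i // i ≠ i₀} =>
    (hL i).exists_extension (hA i) (hB i) (hAB i) (hAA' i) (hBB' i)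
  obtain ⟨C, hCM, hC⟩ := hess.exists_isConnected_subset_iInter (hA i₀) (hB i₀) (hAB i₀) hM
  refine ⟨C, fun z hzC hzT => hempty.subset (mem_iInter.2 fun i => ?_ : ⟨z, hzT⟩ ∈ ⋂ i, L i), hC⟩
  exact hML i (mem_iInter.1 (hCM hzC) i)

end Separators

section Collapse

open AffineMap (lineMap)

variable {x y : HilbertCube} {k : ℕ}

/-- The affine parameter in `[0, 1]` of a point between the faces `negFace k` and `posFace k`. -/
noncomputable def faceParam (k : ℕ) (z : HilbertCube) : ℝ := ((z k : ℝ) + 1) / 2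

theorem faceParam_mem_Icc (k : ℕ) (z : HilbertCube) : faceParam k z ∈ Icc (0 : ℝ) 1 := by
  obtain ⟨hlow, hhigh⟩ := (z k).2
  constructor <;> unfold faceParam <;> linarith

theorem faceParam_eq_zero_iff {z : HilbertCube} : faceParam k z = 0 ↔ z ∈ negFace k := by
  simp only [faceParam, negFace, mem_ofPred_eq]
  constructor <;> intro h <;> linarith

theorem faceParam_eq_one_iff {z : HilbertCube} : faceParam k z = 1 ↔ z ∈ posFace k := by
  simp only [faceParam, posFace, mem_ofPred_eq]
  constructor <;> intro h <;> linarith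

theorem continuous_faceParam (k : ℕ) : Continuous (faceParam k) := by
  unfold faceParam
  fun_prop

/-- The `j`-th coordinate of `collapse x y k z`. At `j = k` it runs affinely from `x k` to `y k`, so
that it determines `z k`; the other coordinates keep a multiple of `z j` that vanishes exactly on
the two faces. -/
noncomputable def collapseCoord (x y : HilbertCube) (k : ℕ) (z : HilbertCube) (j : ℕ) : ℝ :=
  lineMap (lineMap (x j : ℝ) (y j : ℝ) (faceParam k z)) (z j : ℝ)
    (if j = k then 0 else faceParam k z * (1 - faceParam k z))

theorem collapseCoord_mem_Icc (x y : HilbertCube) (k : ℕ) (z : HilbertCube) (j : ℕ) :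
    collapseCoord x y k z j ∈ Icc (-1 : ℝ) 1 := by
  obtain ⟨hnonneg, hle⟩ := faceParam_mem_Icc k z
  refine (convex_Icc _ _).lineMap_mem ?_ (z j).2 ?_
  · exact (convex_Icc _ _).lineMap_mem (x j).2 (y j).2 ⟨hnonneg, hle⟩
  · split_ifs
    · simp
    · constructor <;> nlinarith

/-- A self-map of the Hilbert cube that collapses the faces `negFace k` and `posFace k` to the
points `x` and `y`, and is injective elsewhere when `x k ≠ y k`. -/
noncomputable def collapse (x y : HilbertCube) (k : ℕ) (z : HilbertCube) : HilbertCube :=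
  fun j => ⟨collapseCoord x y k z j, collapseCoord_mem_Icc x y k z j⟩

theorem continuous_collapse (x y : HilbertCube) (k : ℕ) : Continuous (collapse x y k) := by
  have := continuous_faceParam k
  refine continuous_pi fun j => Continuous.subtype_mk ?_ _
  simp only [collapseCoord, AffineMap.lineMap_apply_module]
  split_ifs <;> fun_prop

theorem collapse_of_mem_negFace {z : HilbertCube} (hz : z ∈ negFace k) : collapse x y k z = x := by
  ext j
  simp [collapse, collapseCoord, faceParam_eq_zero_iff.2 hz]

theorem collapse_of_mem_posFace {z : HilbertCube} (hz : z ∈ posFace k) : collapse x y k z = y := by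
  ext j
  simp [collapse, collapseCoord, faceParam_eq_one_iff.2 hz]

theorem faceParam_eq_of_collapse_eq (hk : x k ≠ y k) {z w : HilbertCube}
    (h : collapse x y k z = collapse x y k w) : faceParam k z = faceParam k w := by
  have hcoord : collapseCoord x y k z k = collapseCoord x y k w k :=
    congrArg Subtype.val (congrFun h k)
  simp only [collapseCoord, if_true, AffineMap.lineMap_apply_zero] at hcoord
  exact AffineMap.lineMap_injective ℝ (Subtype.coe_injective.ne hk) hcoord

theorem injOn_collapse (hk : x k ≠ y k) :
    InjOn (collapse x y k) (negFace k ∪ posFace k)ᶜ := by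
  intro z hz w _ h
  have hparam := faceParam_eq_of_collapse_eq hk h
  ext j
  obtain rfl | hj := eq_or_ne j k
  · simpa [faceParam] using hparam
  · have hcoord : collapseCoord x y k z j = collapseCoord x y k w j :=
      congrArg Subtype.val (congrFun h j)
    simp only [mem_compl_iff, mem_union, not_or, ← faceParam_eq_zero_iff,
      ← faceParam_eq_one_iff] at hz
    have hne : faceParam k z * (1 - faceParam k z) ≠ 0 :=
      mul_ne_zero hz.1 (sub_ne_zero.2 (Ne.symm hz.2))
    simpa [collapseCoord, ← hparam, hj, AffineMap.lineMap_apply_module, hne] using hcoord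

theorem isClosedEmbedding_restrictPreimage_collapse (hk : x k ≠ y k) {S : Set HilbertCube}
    (hx : x ∉ S) (hy : y ∉ S) :
    Topology.IsClosedEmbedding (S.restrictPreimage (collapse x y k)) := by
  have hcont := continuous_collapse x y k
  have hsub : collapse x y k ⁻¹' S ⊆ (negFace k ∪ posFace k)ᶜ := by
    rintro z hz (hneg | hpos)
    · rw [mem_preimage, collapse_of_mem_negFace hneg] at hz
      exact hx hz
    · rw [mem_preimage, collapse_of_mem_posFace hpos] at hz
      exact hy hz
  exact .of_continuous_injective_isClosedMap hcont.restrictPreimage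
    ((mapsTo_preimage _ _).restrict_inj.2 ((injOn_collapse hk).mono hsub))
    (hcont.isClosedMap.restrictPreimage S)

end Collapse

/-- If `S ⊆ Q` is weakly infinite dimensional, then `Q \ S` is continuum
connected: any two of its points lie in a compact connected subset of `Q \ S`. -/
theorem continuumConnected_compl_of_weaklyInfiniteDimensional
    (S : Set HilbertCube) (hS : ¬ StronglyInfiniteDimensional S) :
    ∀ x ∈ Sᶜ, ∀ y ∈ Sᶜ, ∃ C : Set HilbertCube,
      C ⊆ Sᶜ ∧ IsCompact C ∧ IsConnected C ∧ x ∈ C ∧ y ∈ C := by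
  intro x hx y hy
  obtain rfl | hxy := eq_or_ne x y
  · exact ⟨{x}, singleton_subset_iff.2 hx, isCompact_singleton, isConnected_singleton, rfl, rfl⟩
  obtain ⟨k, hk⟩ := Function.ne_iff.1 hxy
  have hpreimage : ¬ StronglyInfiniteDimensional (collapse x y k ⁻¹' S) := fun h =>
    hS (h.of_isClosedEmbedding (isClosedEmbedding_restrictPreimage_collapse hk hx hy))
  obtain ⟨C, hCS, hcompact, hconn, ⟨a, haC, ha⟩, b, hbC, hb⟩ :=
    isEssentialFamily_negFace_posFace.exists_isConnected_subset_compl isClosed_negFace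
      isClosed_posFace disjoint_negFace_posFace hpreimage k
  have hcont := continuous_collapse x y k
  exact ⟨collapse x y k '' C, image_subset_iff.2 hCS, hcompact.image hcont,
    hconn.image _ hcont.continuousOn, ⟨a, haC, collapse_of_mem_negFace ha⟩,
    ⟨b, hbC, collapse_of_mem_posFace hb⟩⟩
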